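/- Let q be a prime power with q ≡ 2 (mod 3), let k₁, …, k_n be distinct odd positive integers, and let A₀ = Σ_j a_j t^j ∈ 𝔽_q[t] be a polynomial with nonzero constant term such that t^{k_i} − 1 divides A₀ in 𝔽_q[t] for every i = 1, …, n. Let A = Σ_j a_j t^{q^j} be the associated 𝔽_q-additive polynomial. Then there exist n pairwise distinct pairs (F_1,G_1), …, (F_n,G_n) ∈ 𝔽_q[t] × 𝔽_q[t] such that for each i, G_i² − G_i = A·F_i³ and G_i′ ≠ 0; that is, the cubic twist y² − y = A(t)·x³ has at least n separable ∞-integral points (lying in distinct Frobenius orbits). -/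

import Mathlib

open Polynomial

/-!
Passing to the associated additive polynomial turns multiplication by `t ^ k - 1` into
`B ↦ B ^ (q ^ k) - B`, so a factorization `A₀ = (t ^ k - 1) * b` becomes `A = B ^ (q ^ k) - B`,
where `B` is the additive polynomial of `b`. For odd `k` we have `q ^ k = 3 * m + 2`, and then
`(x, y) = (B ^ m, B ^ (3 * m + 1))` satisfies `y² - y = A x³`. The derivative of `B` is the
constant `b(0) ≠ 0` and `3 * m + 1 = -1` in `𝔽_q`, so the point is separable. Since `y = B x³`
and `B` is nonconstant, the point determines `B`, hence `m` and `k`.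
-/

section AdditivePoly

variable {K : Type*} [Field K] [Fintype K]

/-- The additive polynomial `∑ a_j X ^ (q ^ j)` associated with `p = ∑ a_j X ^ j` over the field
with `q` elements. It is encoded as the value at `X` of `p` evaluated at the `q`-power Frobenius
endomorphism of `K[X]`, so that products of polynomials become compositions. -/
noncomputable def additivePoly (p : K[X]) : K[X] :=
  aeval (FiniteField.frobeniusAlgHom K K[X]).toLinearMap p X

theorem frobeniusAlgHom_toLinearMap_pow_apply {R : Type*} [CommRing R] [Algebra K R] (k : ℕ)
    (x : R) :
    ((FiniteField.frobeniusAlgHom K R).toLinearMap ^ k) x = x ^ Fintype.card K ^ k := by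
  induction k with
  | zero => simp
  | succ k ih => simp [pow_succ', ih, pow_mul']

theorem additivePoly_eq_sum_range (p : K[X]) :
    additivePoly p = ∑ j ∈ Finset.range (p.natDegree + 1),
      C (p.coeff j) * X ^ Fintype.card K ^ j := by
  simp only [additivePoly, aeval_eq_sum_range, LinearMap.sum_apply, LinearMap.smul_apply,
    frobeniusAlgHom_toLinearMap_pow_apply, smul_eq_C_mul]

theorem additivePoly_X_pow_sub_one_mul (k : ℕ) (p : K[X]) :
    additivePoly ((X ^ k - 1) * p) = additivePoly p ^ Fintype.card K ^ k - additivePoly p := by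
  simp [additivePoly, frobeniusAlgHom_toLinearMap_pow_apply]

theorem derivative_additivePoly (p : K[X]) : derivative (additivePoly p) = C (p.coeff 0) := by
  have split_linear_term :
      additivePoly p = additivePoly p.divX ^ Fintype.card K + C (p.coeff 0) * X := by
    conv_lhs => rw [← X_mul_divX_add p]
    simp [-X_mul_divX_add, additivePoly, smul_eq_C_mul]
  simp [split_linear_term, derivative_pow]

end AdditivePoly

section PolynomialPowers

variable {R : Type*}

theorem derivative_pow_ne_zero [CommSemiring R] [NoZeroDivisors R] {f : R[X]} {n : ℕ}
    (hn : (n : R) ≠ 0) (hf : derivative f ≠ 0) : derivative (f ^ n) ≠ 0 := by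
  have hf₀ : f ≠ 0 := fun h => hf (by rw [h, derivative_zero])
  rw [derivative_pow]
  exact mul_ne_zero (mul_ne_zero (C_ne_zero.mpr hn) (pow_ne_zero _ hf₀)) hf

theorem pow_right_injective_of_natDegree_ne_zero [Semiring R] [NoZeroDivisors R] {f : R[X]}
    (hf : f.natDegree ≠ 0) : Function.Injective (fun n : ℕ => f ^ n) := by
  intro m n h
  have hdeg : m * f.natDegree = n * f.natDegree := by
    simpa only [natDegree_pow] using congrArg natDegree h
  exact Nat.eq_of_mul_eq_mul_right (Nat.pos_of_ne_zero hf) hdeg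

end PolynomialPowers

section CubicTwistPoint

/-- The point `(B ^ m, B ^ (3 * m + 1))` of the cubic twist `y² - y = (B ^ (3 * m + 2) - B) x³`. -/
def cubicTwistPoint {M : Type*} [Monoid M] (B : M) (m : ℕ) : M × M :=
  (B ^ m, B ^ (3 * m + 1))

theorem cubicTwistPoint_equation {R : Type*} [CommRing R] (B : R) (m : ℕ) :
    (cubicTwistPoint B m).2 ^ 2 - (cubicTwistPoint B m).2 =
      (B ^ (3 * m + 2) - B) * (cubicTwistPoint B m).1 ^ 3 := by
  simp only [cubicTwistPoint]
  ring

theorem cubicTwistPoint_snd_eq_fst_pow_mul {M : Type*} [Monoid M] (B : M) (m : ℕ) :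
    (cubicTwistPoint B m).2 = (cubicTwistPoint B m).1 ^ 3 * B := by
  simp only [cubicTwistPoint, pow_succ, pow_mul']

theorem cubicTwistPoint_inj {R : Type*} [Ring R] [NoZeroDivisors R] {B D : R[X]} {m l : ℕ}
    (hB : B.natDegree ≠ 0) : cubicTwistPoint B m = cubicTwistPoint D l ↔ B = D ∧ m = l := by
  refine ⟨fun h => ?_, fun ⟨hBD, hml⟩ => by rw [hBD, hml]⟩
  have hB₀ : B ≠ 0 := ne_zero_of_natDegree_gt (Nat.pos_of_ne_zero hB)
  have hx : (cubicTwistPoint B m).1 ^ 3 ≠ 0 := pow_ne_zero _ (pow_ne_zero _ hB₀)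
  obtain rfl : B = D := mul_left_cancel₀ hx <| by
    rw [← cubicTwistPoint_snd_eq_fst_pow_mul, h, cubicTwistPoint_snd_eq_fst_pow_mul]
  exact ⟨rfl, pow_right_injective_of_natDegree_ne_zero hB (congrArg Prod.fst h)⟩

theorem derivative_cubicTwistPoint_snd_ne_zero {R : Type*} [CommSemiring R] [NoZeroDivisors R]
    {B : R[X]} {m : ℕ} (hm : ((3 * m + 2 : ℕ) : R) = 0) (hB : derivative B ≠ 0) :
    derivative (cubicTwistPoint B m).2 ≠ 0 := by
  have : Nontrivial R := Nontrivial.of_polynomial_ne hB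
  refine derivative_pow_ne_zero (fun h => one_ne_zero (α := R) ?_) hB
  rwa [← add_assoc (3 * m) 1 1, Nat.cast_add_one, h, zero_add] at hm

end CubicTwistPoint

theorem exists_pow_eq_three_mul_add_two {q k : ℕ} (hq : q % 3 = 2) (hk : Odd k) :
    ∃ m, q ^ k = 3 * m + 2 := by
  obtain ⟨l, rfl⟩ := hk
  have hmod : q ^ (2 * l + 1) % 3 = 2 := by
    simp [pow_succ, pow_mul, Nat.mul_mod, Nat.pow_mod, hq]
  exact ⟨q ^ (2 * l + 1) / 3, by omega⟩

theorem stmt3 (Fq : Type*) [Field Fq] [Fintype Fq]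
    (hq : Fintype.card Fq % 3 = 2)
    (n : ℕ) (k : Fin n → ℕ) (hodd : ∀ i, Odd (k i)) (hinj : Function.Injective k)
    (A₀ : Polynomial Fq) (hA₀ : A₀.coeff 0 ≠ 0)
    (hdvd : ∀ i, (X ^ (k i) - 1 : Polynomial Fq) ∣ A₀)
    (A : Polynomial Fq)
    (hA : A = ∑ j ∈ Finset.range (A₀.natDegree + 1),
      C (A₀.coeff j) * X ^ (Fintype.card Fq) ^ j) :
    ∃ P : Fin n → Polynomial Fq × Polynomial Fq, Function.Injective P ∧
      ∀ i, (P i).2 ^ 2 - (P i).2 = A * (P i).1 ^ 3 ∧ derivative (P i).2 ≠ 0 := by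
  choose b hb using hdvd
  choose m hm using fun i => exists_pow_eq_three_mul_add_two hq (hodd i)
  have hder i : derivative (additivePoly (b i)) ≠ 0 := by
    rw [hb i, mul_coeff_zero] at hA₀
    rw [derivative_additivePoly]
    exact C_ne_zero.mpr (right_ne_zero_of_mul hA₀)
  have hdeg i : (additivePoly (b i)).natDegree ≠ 0 := mt derivative_of_natDegree_zero (hder i)
  have hA_eq i : A = additivePoly (b i) ^ (3 * m i + 2) - additivePoly (b i) := by
    rw [hA, ← additivePoly_eq_sum_range, hb i, additivePoly_X_pow_sub_one_mul, hm i]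
  refine ⟨fun i => cubicTwistPoint (additivePoly (b i)) (m i), fun i j hij => ?_, fun i => ⟨?_, ?_⟩⟩
  · have hmij : m i = m j := ((cubicTwistPoint_inj (hdeg i)).mp hij).2
    have hpow : Fintype.card Fq ^ k i = Fintype.card Fq ^ k j := by rw [hm, hm, hmij]
    exact hinj (Nat.pow_right_injective Fintype.one_lt_card hpow)
  · rw [hA_eq i, cubicTwistPoint_equation]
  · refine derivative_cubicTwistPoint_snd_ne_zero ?_ (hder i)
    rw [← hm i, Nat.cast_pow, FiniteField.cast_card_eq_zero, zero_pow (hodd i).pos.ne']
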